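/- Let W be a Coxeter group with generators a,b,c,d where m(a,b) ≥ 3, m(b,c) = 5, m(c,d) ≥ 3, and all other pairs commute, and let w be fully commutative. Then if every reduced word of w is (acbc)(bdcb)(acbc)⋯ alternating, i.e., w_k = XYXY⋯ with X = acbc, Y = bdcb and k total factors, then w_k is a reduced word of a fully commutative element for every k ≥ 0. -/

import Mathlib

open CoxeterSystem

def CommStep {B : Type*} (M : CoxeterMatrix B) (l l' : List B) : Prop :=
  ∃ (u v : List B) (a b : B), M a b = 2 ∧ l = u ++ a :: b :: v ∧ l' = u ++ b :: a :: v

def CommEquiv {B : Type*} (M : CoxeterMatrix B) : List B → List B → Prop :=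
  Relation.ReflTransGen fun l l' => CommStep M l l' ∨ CommStep M l' l

def FullyCommutative {B W : Type*} [Group W] {M : CoxeterMatrix B}
    (cs : CoxeterSystem M W) (w : W) : Prop :=
  ∀ l l', cs.IsReduced l → cs.wordProd l = w → cs.IsReduced l' → cs.wordProd l' = w →
    CommEquiv M l l'

/-- The word `w_k = XYXY⋯` with `k` alternating factors, `X = acbc`, `Y = bdcb`,
where `a = 0`, `b = 1`, `c = 2`, `d = 3`. -/
def wWord (k : ℕ) : List (Fin 4) :=
  (List.ofFn fun i : Fin k =>
    if (i : ℕ) % 2 = 0 then ([0, 2, 1, 2] : List (Fin 4)) else [1, 3, 2, 1]).flatten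

/-!
In the geometric representation the product of two simple reflections has order exactly `M i j`.
Combined with the strong exchange property this yields the braid lemma: an element with distinct
right descents `i` and `j` has a reduced word ending in the braid word of `i` and `j`. Stembridge's
criterion follows by induction on the length: a word whose commutation class contains no factor `ii`
and no braid word of length at least three is a reduced word of a fully commutative element.

The commutation class of `w_k` consists of linear extensions of an order ideal of the heap of
`(acbcbdcb)^∞`. Whether a letter may occur next in such a linear extension depends only on the
numbers of occurrences of its neighbours and itself so far; this excludes all factors `ii`, all
factors `iji` other than `bcb` and `cbc`, and also `bcbcb` and `cbcbc`.
-/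

section Chebyshev

open Polynomial Polynomial.Chebyshev Real

theorem sin_two_pi_div_pos {m : ℕ} (hm : 3 ≤ m) : 0 < sin (2 * (π / m)) := by
  have hm' : (3 : ℝ) ≤ m := by exact_mod_cast hm
  have hm0 : (0 : ℝ) < m := by linarith
  apply sin_pos_of_pos_of_lt_pi (by positivity)
  rw [← mul_div_assoc, div_lt_iff₀ hm0]
  nlinarith [pi_pos]

theorem eval_S_two_mul_cos_eq_zero {k m : ℕ} (hm : 3 ≤ m) (h : 2 * (k + 1) = m) :
    (S ℝ k).eval (2 * cos (2 * (π / m))) = 0 := by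
  have hs := sin_two_pi_div_pos hm
  have hm0 : (m : ℝ) ≠ 0 := by positivity
  have hS := S_two_mul_real_cos (2 * (π / m)) k
  have hangle : ((k : ℤ) + 1) * (2 * (π / m)) = π := by
    rw [← h] at hm0 ⊢
    push_cast at hm0 ⊢
    field_simp
  rw [hangle, sin_pi] at hS
  exact (mul_eq_zero.mp hS).resolve_right hs.ne'

theorem eval_S_add_eval_S_sub_one_two_mul_cos_eq_zero {k m : ℕ} (hm : 3 ≤ m)
    (h : 2 * k + 1 = m) :
    (S ℝ k).eval (2 * cos (2 * (π / m))) + (S ℝ (k - 1)).eval (2 * cos (2 * (π / m))) = 0 := by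
  have hs := sin_two_pi_div_pos hm
  have hm0 : (m : ℝ) ≠ 0 := by positivity
  have hS := S_two_mul_real_cos (2 * (π / m)) k
  have hS' := S_two_mul_real_cos (2 * (π / m)) (k - 1)
  have hangle :
      ((k : ℤ) + 1) * (2 * (π / m)) = 2 * π - (((k : ℤ) - 1 : ℤ) + 1) * (2 * (π / m)) := by
    rw [← h] at hm0 ⊢
    push_cast at hm0 ⊢
    field_simp
    ring
  rw [hangle, sin_two_pi_sub, ← hS'] at hS
  refine (mul_eq_zero.mp ?_).resolve_right hs.ne'
  linear_combination hS

theorem dvd_of_eval_S_two_mul_cos {k m : ℕ} (hm : 3 ≤ m)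
    (h₀ : (S ℝ (k - 1)).eval (2 * cos (2 * (π / m))) = 0)
    (h₁ : (S ℝ k).eval (2 * cos (2 * (π / m))) = 1) : m ∣ k := by
  have hs := sin_two_pi_div_pos hm
  have hm0 : (m : ℝ) ≠ 0 := by positivity
  have hsin := S_two_mul_real_cos (2 * (π / m)) (k - 1)
  have hcos := S_two_mul_real_cos (2 * (π / m)) k
  push_cast at hsin hcos
  rw [h₀, zero_mul, sub_add_cancel] at hsin
  rw [h₁, one_mul, add_mul, one_mul, sin_add, ← hsin, zero_mul, zero_add, eq_comm] at hcos
  obtain ⟨n, hn⟩ := (cos_eq_one_iff _).mp (mul_eq_right₀ hs.ne' |>.mp hcos)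
  have : (k : ℝ) = m * n := by
    field_simp at hn
    linarith
  exact Int.natCast_dvd_natCast.mp ⟨n, by exact_mod_cast this⟩

end Chebyshev

section Reflections

open Module Polynomial Polynomial.Chebyshev Real

variable {V : Type*} [AddCommGroup V] [Module ℝ V] {x y : V} {f g : Dual ℝ V}

theorem reflection_mul_reflection_pow_eq_one (hf : f x = 2) (hg : g y = 2) {m : ℕ} (hm : 3 ≤ m)
    (h : f y * g x = 4 * cos (π / m) ^ 2) : (reflection hf * reflection hg) ^ m = 1 := by
  have ht : 2 * cos (2 * (π / m)) = f y * g x - 2 := by rw [h, cos_two_mul]; ring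
  ext z
  rw [reflection_mul_reflection_pow_apply hf hg m z _ ht]
  rcases m.even_or_odd' with ⟨p, hp | hp⟩
  · obtain ⟨k, rfl⟩ : ∃ k, p = k + 1 := ⟨p - 1, by lia⟩
    have hS := eval_S_two_mul_cos_eq_zero hm hp.symm
    have h₁ : ((m : ℤ) - 2) / 2 = k := by lia
    have h₂ : ((m : ℤ) - 1) / 2 = k := by lia
    simp [h₁, h₂, hS]
  · have hS := eval_S_add_eval_S_sub_one_two_mul_cos_eq_zero hm hp.symm
    have h₁ : ((m : ℤ) - 1) / 2 = p := by lia
    have h₂ : ((m : ℤ) - 3) / 2 = p - 1 := by lia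
    have h₃ : (m : ℤ) / 2 = p := by lia
    have h₄ : ((m : ℤ) - 2) / 2 = p - 1 := by lia
    simp [h₁, h₂, h₃, h₄, hS]

theorem eval_S_of_reflection_mul_reflection_pow_eq_one (hf : f x = 2) (hg : g y = 2)
    (hxy : LinearIndependent ℝ ![x, y]) (hgx : g x ≠ 0) {k : ℕ}
    (h : (reflection hf * reflection hg) ^ k = 1) :
    (S ℝ (k - 1)).eval (f y * g x - 2) = 0 ∧ (S ℝ k).eval (f y * g x - 2) = 1 := by
  have hx := reflection_mul_reflection_pow_apply_self hf hg k
  rw [h, LinearEquiv.coe_one, id, ← sub_eq_zero] at hx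
  have hcoef := LinearIndependent.pair_iff.mp hxy
    (1 - ((S ℝ k).eval (f y * g x - 2) + (S ℝ (k - 1)).eval (f y * g x - 2)))
    (-((S ℝ (k - 1)).eval (f y * g x - 2) * -g x)) (by rw [← hx]; module)
  have h₀ : (S ℝ (k - 1)).eval (f y * g x - 2) = 0 := by simpa [hgx] using hcoef.2
  exact ⟨h₀, by linarith [hcoef.1]⟩

/-- Since `π / 0 = 0`, the value `m = 0` stands for infinite order. -/
theorem orderOf_reflection_mul_reflection (hf : f x = 2) (hg : g y = 2)
    (hxy : LinearIndependent ℝ ![x, y]) {m : ℕ} (hm : m = 0 ∨ 3 ≤ m)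
    (h : f y * g x = 4 * cos (π / m) ^ 2) : orderOf (reflection hf * reflection hg) = m := by
  have hgx : g x ≠ 0 := by
    have hcos : cos (π / m) ≠ 0 := by
      rcases hm with rfl | hm
      · simp
      · have hm' : (3 : ℝ) ≤ m := by exact_mod_cast hm
        refine (cos_pos_of_mem_Ioo ⟨by linarith [pi_pos, (by positivity : 0 < π / m)], ?_⟩).ne'
        exact div_lt_div_of_pos_left pi_pos two_pos (by linarith)
    exact right_ne_zero_of_mul (h ▸ mul_ne_zero four_ne_zero (pow_ne_zero 2 hcos))
  have ht : f y * g x - 2 = 2 * cos (2 * (π / m)) := by rw [h, cos_two_mul]; ring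
  have hS {k : ℕ} (hk : (reflection hf * reflection hg) ^ k = 1) :=
    ht ▸ eval_S_of_reflection_mul_reflection_pow_eq_one hf hg hxy hgx hk
  rcases hm with rfl | hm
  · refine orderOf_eq_zero_iff'.mpr fun k hk hk1 => hk.ne' ?_
    simpa using (hS hk1).1
  · refine Nat.dvd_antisymm (orderOf_dvd_of_pow_eq_one ?_) ?_
    · exact reflection_mul_reflection_pow_eq_one hf hg hm h
    · obtain ⟨h₀, h₁⟩ := hS (pow_orderOf_eq_one _)
      exact dvd_of_eval_S_two_mul_cos hm h₀ h₁

end Reflections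

section GeometricRepresentation

open Module Real

variable {B : Type*} (M : CoxeterMatrix B)

/-- The `i`-th simple coroot of the geometric representation, pairing with the `j`-th simple root
to `-2 cos (π / m)` for `m = M i j`. As `π / 0 = 0`, an infinite bond `M i j = 0` gets the pairing
`-2`, as it should. -/
noncomputable def simpleCoroot (i : B) : Dual ℝ (B →₀ ℝ) :=
  Finsupp.linearCombination ℝ fun j => -2 * cos (π / M i j)

theorem simpleCoroot_single (i j : B) :
    simpleCoroot M i (Finsupp.single j 1) = -2 * cos (π / M i j) := by
  simp [simpleCoroot]

theorem simpleCoroot_single_self (i : B) : simpleCoroot M i (Finsupp.single i 1) = 2 := by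
  simp [simpleCoroot_single]

theorem simpleCoroot_mul_simpleCoroot (i j : B) :
    simpleCoroot M i (Finsupp.single j 1) * simpleCoroot M j (Finsupp.single i 1) =
      4 * cos (π / M i j) ^ 2 := by
  rw [simpleCoroot_single, simpleCoroot_single, M.symmetric j i]
  ring

/-- The action of the `i`-th simple generator in the geometric representation. -/
noncomputable def rootReflection (i : B) : (B →₀ ℝ) ≃ₗ[ℝ] (B →₀ ℝ) :=
  reflection (simpleCoroot_single_self M i)

theorem rootReflection_mul_self (i : B) : rootReflection M i * rootReflection M i = 1 :=
  LinearEquiv.ext (involutive_reflection (simpleCoroot_single_self M i))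

theorem rootReflection_mul_rootReflection_sq {i j : B} (h : M i j = 2) :
    (rootReflection M i * rootReflection M j) ^ 2 = 1 := by
  have hij : simpleCoroot M i (Finsupp.single j 1) = 0 := by simp [simpleCoroot_single, h]
  have hji : simpleCoroot M j (Finsupp.single i 1) = 0 := by
    simp [simpleCoroot_single, M.symmetric j i, h]
  have hcomm : Commute (rootReflection M i) (rootReflection M j) := by
    refine LinearEquiv.ext fun z => ?_
    simp only [LinearEquiv.mul_apply, rootReflection, reflection_apply, map_sub, map_smul, hij, hji]
    module
  rw [hcomm.mul_pow, sq, sq, rootReflection_mul_self, rootReflection_mul_self, one_mul]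

theorem orderOf_rootReflection_mul_rootReflection {i j : B} (hij : i ≠ j)
    (h : M i j = 0 ∨ 3 ≤ M i j) :
    orderOf (rootReflection M i * rootReflection M j) = M i j := by
  refine orderOf_reflection_mul_reflection _ _ ?_ h (simpleCoroot_mul_simpleCoroot M i j)
  refine LinearIndependent.pair_iff.mpr fun r s hrs => ⟨?_, ?_⟩
  · simpa [hij] using DFunLike.congr_fun hrs i
  · simpa [hij.symm] using DFunLike.congr_fun hrs j

theorem isLiftable_rootReflection : M.IsLiftable (rootReflection M) := by
  intro i j
  rcases eq_or_ne i j with rfl | hij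
  · simp [rootReflection_mul_self]
  have h1 : M i j ≠ 1 := M.off_diagonal i j hij
  obtain h | h : M i j = 2 ∨ (M i j = 0 ∨ 3 ≤ M i j) := by lia
  · rw [h, rootReflection_mul_rootReflection_sq M h]
  · rw [← orderOf_dvd_iff_pow_eq_one, orderOf_rootReflection_mul_rootReflection M hij h]

variable {M} {W : Type*} [Group W] (cs : CoxeterSystem M W)

theorem simple_ne_simple {i j : B} (hij : i ≠ j) : cs.simple i ≠ cs.simple j := by
  intro h
  have hrefl : rootReflection M i = rootReflection M j := by
    simpa using congrArg (cs.lift ⟨_, isLiftable_rootReflection M⟩) h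
  have hi : rootReflection M i (Finsupp.single i 1) i = -1 := by simp [rootReflection]
  have hj : rootReflection M j (Finsupp.single i 1) i = 1 := by
    simp [rootReflection, reflection_apply, hij]
  norm_num [← hrefl, hi] at hj

theorem orderOf_simple_mul_simple (i j : B) : orderOf (cs.simple i * cs.simple j) = M i j := by
  refine Nat.dvd_antisymm (orderOf_dvd_of_pow_eq_one (cs.simple_mul_simple_pow i j)) ?_
  rcases eq_or_ne i j with rfl | hij
  · simp
  have h1 : M i j ≠ 1 := M.off_diagonal i j hij
  obtain h | h : M i j = 2 ∨ (M i j = 0 ∨ 3 ≤ M i j) := by lia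
  · have hne : cs.simple i * cs.simple j ≠ 1 := by
      rw [Ne, mul_eq_one_iff_eq_inv, cs.inv_simple]
      exact simple_ne_simple cs hij
    rw [orderOf_eq_prime (h ▸ cs.simple_mul_simple_pow i j) hne, h]
  · have hdvd := orderOf_map_dvd (cs.lift ⟨_, isLiftable_rootReflection M⟩)
      (cs.simple i * cs.simple j)
    simpa [orderOf_rootReflection_mul_rootReflection M hij h] using hdvd

end GeometricRepresentation

section Exchange

variable {B W : Type*} [Group W] {M : CoxeterMatrix B} (cs : CoxeterSystem M W)

theorem rightInvSeq_append (ω ω' : List B) :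
    cs.rightInvSeq (ω ++ ω') =
      (cs.rightInvSeq ω).map (MulAut.conj (cs.wordProd ω')⁻¹) ++ cs.rightInvSeq ω' := by
  induction ω with
  | nil => simp
  | cons i ω ih => simp [rightInvSeq, ih, wordProd_append, mul_assoc]

theorem exists_wordProd_eq_mul_of_mem_rightInvSeq {ω : List B} {t : W}
    (ht : t ∈ cs.rightInvSeq ω) :
    ∃ ω' : List B, ω'.length + 1 = ω.length ∧ cs.wordProd ω' = cs.wordProd ω * t := by
  obtain ⟨n, hn, rfl⟩ := List.mem_iff_getElem.mp ht
  have hn' : n < ω.length := by simpa using hn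
  refine ⟨ω.eraseIdx n, List.length_eraseIdx_add_one hn', ?_⟩
  rw [← cs.wordProd_mul_getD_rightInvSeq, List.getD_eq_getElem]

theorem rightInvSeq_alternatingWord (i j : B) (k : ℕ) :
    cs.rightInvSeq (alternatingWord i j k) =
      ((List.range k).map fun n => cs.simple j * (cs.simple i * cs.simple j) ^ n).reverse := by
  induction k generalizing i j with
  | zero => rfl
  | succ k ih =>
    have hconj (n : ℕ) : cs.simple j * (cs.simple i * (cs.simple j * cs.simple i) ^ n) *
        cs.simple j = cs.simple j * (cs.simple i * cs.simple j) ^ (n + 1) := by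
      rw [← mul_assoc, ← pow_succ', mul_pow_mul]
    rw [alternatingWord_succ, rightInvSeq_concat, ih, List.range_succ_eq_map]
    simp [hconj, Function.comp_def]

open scoped Classical in
/-- The action of the `i`-th simple generator on `W × ℤ/2` whose extension to words counts the
occurrences in right inversion sequences modulo two. -/
noncomputable def parityStep (i : B) : Function.End (W × ZMod 2) := fun p =>
  (cs.simple i * p.1 * cs.simple i, p.2 + if p.1 = cs.simple i then 1 else 0)

open scoped Classical in
theorem prod_map_parityStep_apply (ω : List B) (p : W × ZMod 2) :
    (ω.map (parityStep cs)).prod p =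
      (cs.wordProd ω * p.1 * (cs.wordProd ω)⁻¹, p.2 + (cs.rightInvSeq ω).count p.1) := by
  induction ω with
  | nil => simp [Function.End.one_def]
  | cons i ω ih =>
    have hconj : cs.wordProd ω * p.1 * (cs.wordProd ω)⁻¹ = cs.simple i ↔
        (cs.wordProd ω)⁻¹ * cs.simple i * cs.wordProd ω = p.1 := by
      rw [mul_inv_eq_iff_eq_mul, mul_assoc, inv_mul_eq_iff_eq_mul, eq_comm]
    rw [List.map_cons, List.prod_cons]
    change parityStep cs i ((ω.map (parityStep cs)).prod p) = _
    rw [ih, parityStep, rightInvSeq, List.count_cons]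
    simp only [hconj, beq_iff_eq]
    simp [wordProd_cons, mul_assoc, add_assoc]

theorem prod_map_alternatingWord {G : Type*} [Monoid G] (f : B → G) (i j : B) (m : ℕ) :
    ((alternatingWord i j (2 * m)).map f).prod = (f i * f j) ^ m := by
  induction m with
  | zero => simp [alternatingWord]
  | succ m ih =>
    rw [Nat.mul_succ, alternatingWord_succ, alternatingWord_succ]
    simp [ih, pow_succ]

theorem rightInvSeq_alternatingWord_two_mul (i j : B) :
    cs.rightInvSeq (alternatingWord i j (2 * M i j)) =
      cs.rightInvSeq (alternatingWord i j (M i j)) ++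
        cs.rightInvSeq (alternatingWord i j (M i j)) := by
  rw [rightInvSeq_alternatingWord, rightInvSeq_alternatingWord, two_mul, List.range_add,
    List.map_append, List.reverse_append, List.map_map]
  simp only [Function.comp_def, pow_add, cs.simple_mul_simple_pow, one_mul]

theorem isLiftable_parityStep : M.IsLiftable (parityStep cs) := by
  classical
  intro i j
  funext p
  rw [← prod_map_alternatingWord, prod_map_parityStep_apply, rightInvSeq_alternatingWord_two_mul]
  simp [prod_alternatingWord_eq_mul_pow, CharTwo.add_self_eq_zero, Function.End.one_def]

/-- The parity of the number of occurrences of `t` in the right inversion sequence of any word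
for `w`. -/
noncomputable def inversionParity (w t : W) : ZMod 2 :=
  (cs.lift ⟨_, isLiftable_parityStep cs⟩ w (t, 0)).2

theorem lift_parityStep_wordProd (ω : List B) :
    cs.lift ⟨_, isLiftable_parityStep cs⟩ (cs.wordProd ω) = (ω.map (parityStep cs)).prod := by
  rw [wordProd, map_list_prod, List.map_map]
  congr 2
  funext i
  simp

open scoped Classical in
theorem inversionParity_wordProd (ω : List B) (t : W) :
    inversionParity cs (cs.wordProd ω) t = (cs.rightInvSeq ω).count t := by
  rw [inversionParity, lift_parityStep_wordProd, prod_map_parityStep_apply, zero_add]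

theorem inversionParity_mul (w w' t : W) :
    inversionParity cs (w * w') t =
      inversionParity cs w (w' * t * w'⁻¹) + inversionParity cs w' t := by
  classical
  obtain ⟨ω, rfl⟩ := cs.wordProd_surjective w
  obtain ⟨ω', rfl⟩ := cs.wordProd_surjective w'
  have hconj : MulAut.conj (cs.wordProd ω')⁻¹ (cs.wordProd ω' * t * (cs.wordProd ω')⁻¹) = t := by
    simp [mul_assoc]
  have hcount := List.count_map_of_injective (cs.rightInvSeq ω) _
    (MulAut.conj (cs.wordProd ω')⁻¹).injective (cs.wordProd ω' * t * (cs.wordProd ω')⁻¹)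
  rw [hconj] at hcount
  rw [← wordProd_append]
  simp only [inversionParity_wordProd, rightInvSeq_append, List.count_append, hcount, Nat.cast_add]

theorem inversionParity_self {t : W} (ht : cs.IsReflection t) : inversionParity cs t t = 1 := by
  classical
  obtain ⟨u, i, rfl⟩ := ht
  have hone : inversionParity cs 1 (u * cs.simple i * u⁻¹) = 0 := by
    simpa using inversionParity_wordProd cs [] (u * cs.simple i * u⁻¹)
  have hsimple : inversionParity cs (cs.simple i) (cs.simple i) = 1 := by
    simpa using inversionParity_wordProd cs [i] (cs.simple i)
  rw [← mul_inv_cancel u, inversionParity_mul] at hone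
  rw [inversionParity_mul, inversionParity_mul]
  simp only [inv_inv, mul_assoc, inv_mul_cancel_left, inv_mul_cancel, mul_one, one_mul, inv_simple,
    simple_mul_simple_self, hsimple] at hone ⊢
  linear_combination hone

theorem mem_rightInvSeq_of_isRightInversion {ω : List B} {t : W}
    (h : cs.IsRightInversion (cs.wordProd ω) t) : t ∈ cs.rightInvSeq ω := by
  classical
  by_contra hmem
  obtain ⟨ω', hω', hprod⟩ := cs.exists_isReduced (cs.wordProd ω * t)
  have hparity : inversionParity cs (cs.wordProd ω * t) t = 1 := by
    rw [inversionParity_mul, mul_inv_cancel_right, inversionParity_self cs h.1,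
      inversionParity_wordProd, List.count_eq_zero_of_not_mem hmem]
    simp
  have hmem' : t ∈ cs.rightInvSeq ω' := by
    rw [hprod, inversionParity_wordProd] at hparity
    by_contra hmem'
    simp [List.count_eq_zero_of_not_mem hmem'] at hparity
  have hinv := (cs.isRightInversion_of_mem_rightInvSeq hω' hmem').2
  rw [← hprod, mul_assoc, h.1.mul_self, mul_one] at hinv
  exact hinv.asymm h.2

end Exchange

section Braid

variable {B W : Type*} [Group W] {M : CoxeterMatrix B} (cs : CoxeterSystem M W)

theorem exists_isReduced_append_concat {ω ω' : List B} {i : B} (hω : cs.IsReduced (ω ++ ω'))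
    (hi : cs.IsRightDescent (cs.wordProd (ω ++ ω')) i) (hmem : cs.simple i ∉ cs.rightInvSeq ω') :
    ∃ ν : List B, cs.IsReduced (ν ++ ω' ++ [i]) ∧
      cs.wordProd (ν ++ ω' ++ [i]) = cs.wordProd (ω ++ ω') := by
  have hinv := mem_rightInvSeq_of_isRightInversion cs
    ((cs.isRightInversion_simple_iff_isRightDescent _ _).mpr hi)
  rw [rightInvSeq_append, List.mem_append, or_iff_left hmem, List.mem_map] at hinv
  obtain ⟨t, ht, hconj⟩ := hinv
  obtain ⟨ν, hlength, hν⟩ := exists_wordProd_eq_mul_of_mem_rightInvSeq cs ht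
  have hprod : cs.wordProd (ν ++ ω' ++ [i]) = cs.wordProd (ω ++ ω') := by
    obtain rfl : t = cs.wordProd ω' * cs.simple i * (cs.wordProd ω')⁻¹ := by
      rw [← hconj]
      simp [mul_assoc]
    simp [wordProd_append, hν, mul_assoc]
  refine ⟨ν, ?_, hprod⟩
  rw [CoxeterSystem.IsReduced, hprod, hω.eq]
  simp only [List.length_append, List.length_singleton]
  lia

theorem simple_notMem_rightInvSeq_alternatingWord {i j : B} {k : ℕ}
    (hk : M i j = 0 ∨ k < M i j) : cs.simple j ∉ cs.rightInvSeq (alternatingWord j i k) := by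
  rw [rightInvSeq_alternatingWord, List.mem_reverse, List.mem_map]
  rintro ⟨n, hn, heq⟩
  have hpow : (cs.simple i * cs.simple j) ^ (n + 1) = 1 := by
    rw [pow_succ, ← mul_assoc, mul_pow_mul, heq, simple_mul_simple_self]
  have hdvd := orderOf_dvd_of_pow_eq_one hpow
  rw [orderOf_simple_mul_simple] at hdvd
  have hle := Nat.le_of_dvd n.succ_pos hdvd
  have hn' := List.mem_range.mp hn
  rcases hk with hk | hk
  · simp [hk] at hdvd
  · lia

theorem exists_isReduced_append_alternatingWord {w : W} {i j : B} (hi : cs.IsRightDescent w i)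
    (hj : cs.IsRightDescent w j) {k : ℕ} (hk : M i j = 0 ∨ k ≤ M i j) :
    ∃ ω : List B, cs.IsReduced (ω ++ alternatingWord i j k) ∧
      cs.wordProd (ω ++ alternatingWord i j k) = w := by
  induction k generalizing i j with
  | zero =>
    obtain ⟨ω, hω, rfl⟩ := cs.exists_isReduced w
    exact ⟨ω, by simpa [alternatingWord] using hω, by simp [alternatingWord]⟩
  | succ k ih =>
    obtain ⟨ω, hω, rfl⟩ := ih hj hi (by rw [M.symmetric]; lia)
    simpa [alternatingWord_succ] using exists_isReduced_append_concat cs hω hj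
      (simple_notMem_rightInvSeq_alternatingWord cs (hk.imp_right Nat.lt_of_succ_le))

theorem matrix_ne_zero_of_isRightDescent {w : W} {i j : B} (hi : cs.IsRightDescent w i)
    (hj : cs.IsRightDescent w j) : M i j ≠ 0 := by
  intro h
  obtain ⟨ω, hω, hprod⟩ :=
    exists_isReduced_append_alternatingWord cs hi hj (k := cs.length w + 1) (.inl h)
  have hlength := hω.eq
  rw [hprod, List.length_append, length_alternatingWord] at hlength
  lia

theorem exists_isReduced_append_braidWord {w : W} {i j : B} (hi : cs.IsRightDescent w i)
    (hj : cs.IsRightDescent w j) :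
    ∃ ω : List B, cs.IsReduced (ω ++ braidWord M i j) ∧ cs.wordProd (ω ++ braidWord M i j) = w :=
  exists_isReduced_append_alternatingWord cs hi hj (.inr le_rfl)

theorem isRightDescent_of_isReduced_concat {ω : List B} {i : B} (h : cs.IsReduced (ω ++ [i])) :
    cs.IsRightDescent (cs.wordProd (ω ++ [i])) i := by
  have hle := cs.length_wordProd_le ω
  rw [IsRightDescent, h.eq, wordProd_append, wordProd_singleton, simple_mul_simple_cancel_right,
    List.length_append, List.length_singleton]
  lia

theorem exists_isReduced_concat_of_isRightDescent {w : W} {i : B} (h : cs.IsRightDescent w i) :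
    ∃ ω : List B, cs.IsReduced (ω ++ [i]) ∧ cs.wordProd (ω ++ [i]) = w := by
  obtain ⟨ω, hω, rfl⟩ := cs.exists_isReduced w
  simpa using exists_isReduced_append_concat cs (ω' := []) (by simpa using hω) (by simpa using h)
    (by simp)

theorem alternatingWord_isSuffix_of_le (i j : B) {k m : ℕ} (h : k ≤ m) :
    alternatingWord i j k <:+ alternatingWord i j m := by
  induction h with
  | refl => exact List.suffix_rfl
  | step _ ih => exact ih.trans (by rw [alternatingWord_succ']; exact List.suffix_cons _ _)

end Braid

section CommEquiv

variable {B : Type*} {M : CoxeterMatrix B}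

theorem CommStep.symm {l l' : List B} (h : CommStep M l l') : CommStep M l' l := by
  obtain ⟨u, v, i, j, hij, rfl, rfl⟩ := h
  exact ⟨u, v, j, i, M.symmetric i j ▸ hij, rfl, rfl⟩

namespace CommEquiv

theorem symm {l l' : List B} (h : CommEquiv M l l') : CommEquiv M l' l := by
  induction h with
  | refl => exact .refl
  | tail _ hstep ih => exact .head hstep.symm ih

theorem of_commStep {l l' : List B} (h : CommStep M l l') : CommEquiv M l l' :=
  .single (.inl h)

theorem eq_of_forall_commStep {α : Sort*} {f : List B → α}
    (hf : ∀ l l', CommStep M l l' → f l = f l') {l l' : List B} (h : CommEquiv M l l') :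
    f l = f l' := by
  induction h with
  | refl => rfl
  | tail _ hstep ih => exact ih.trans (hf _ _ (hstep.elim id CommStep.symm))

theorem append_right {l l' : List B} (h : CommEquiv M l l') (v : List B) :
    CommEquiv M (l ++ v) (l' ++ v) := by
  have hstep {l l' : List B} (h : CommStep M l l') : CommStep M (l ++ v) (l' ++ v) := by
    obtain ⟨u, u', i, j, hij, rfl, rfl⟩ := h
    exact ⟨u, u' ++ v, i, j, hij, by simp, by simp⟩
  induction h with
  | refl => exact .refl
  | tail _ h ih => exact ih.tail (h.imp hstep hstep)

theorem length_eq {l l' : List B} (h : CommEquiv M l l') : l.length = l'.length := by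
  refine h.eq_of_forall_commStep ?_
  rintro _ _ ⟨u, v, i, j, -, rfl, rfl⟩
  simp

theorem wordProd_eq {W : Type*} [Group W] (cs : CoxeterSystem M W) {l l' : List B}
    (h : CommEquiv M l l') : cs.wordProd l = cs.wordProd l' := by
  refine h.eq_of_forall_commStep ?_
  rintro _ _ ⟨u, v, i, j, hij, rfl, rfl⟩
  have hcomm := cs.wordProd_braidWord_eq i j
  rw [braidWord, braidWord, M.symmetric j i, hij] at hcomm
  have hswap : cs.wordProd [i, j] = cs.wordProd [j, i] := hcomm
  simp only [wordProd_cons, wordProd_nil, mul_one] at hswap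
  simp only [wordProd_append, wordProd_cons, ← mul_assoc (cs.simple i), hswap, mul_assoc]

theorem isReduced {W : Type*} [Group W] {cs : CoxeterSystem M W} {l l' : List B}
    (h : CommEquiv M l l') (hl : cs.IsReduced l) : cs.IsReduced l' := by
  rw [CoxeterSystem.IsReduced, ← h.wordProd_eq cs, hl.eq, h.length_eq]

end CommEquiv

end CommEquiv

section Stembridge

variable {B W : Type*} [Group W] {M : CoxeterMatrix B} {cs : CoxeterSystem M W}

theorem fullyCommutative_of_forall_commEquiv {l : List B}
    (h : ∀ l', cs.IsReduced l' → cs.wordProd l' = cs.wordProd l → CommEquiv M l l') :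
    FullyCommutative cs (cs.wordProd l) :=
  fun _ _ hred hprod hred' hprod' => (h _ hred hprod).symm.trans (h _ hred' hprod')

theorem fullyCommutative_one (cs : CoxeterSystem M W) : FullyCommutative cs 1 := by
  rw [← cs.wordProd_nil]
  refine fullyCommutative_of_forall_commEquiv fun l hl hprod => ?_
  obtain rfl : l = [] := by simpa [hprod, eq_comm] using hl.eq
  exact .refl

theorem FullyCommutative.commEquiv_concat {l l' : List B} {i : B}
    (h : FullyCommutative cs (cs.wordProd l)) (hl : cs.IsReduced (l ++ [i]))
    (hl' : cs.IsReduced (l' ++ [i])) (hprod : cs.wordProd (l' ++ [i]) = cs.wordProd (l ++ [i])) :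
    CommEquiv M (l ++ [i]) (l' ++ [i]) := by
  have hred : cs.IsReduced l := by simpa using hl.take l.length
  have hred' : cs.IsReduced l' := by simpa using hl'.take l'.length
  exact (h _ _ hred rfl hred' (by simpa [wordProd_append] using hprod)).append_right [i]

/-- No word in the commutation class of `l` has a factor `ii`, or a factor `iji⋯` of length
`M i j ≥ 3`. By Stembridge's criterion these are the reduced words of fully commutative
elements. -/
def AvoidsBraids (M : CoxeterMatrix B) (l : List B) : Prop :=
  ∀ l', CommEquiv M l l' →
    (∀ i, ¬ [i, i] <:+: l') ∧ ∀ i j, 3 ≤ M i j → ¬ braidWord M i j <:+: l'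

namespace AvoidsBraids

theorem congr {l l' : List B} (hl : AvoidsBraids M l) (h : CommEquiv M l l') :
    AvoidsBraids M l' :=
  fun _ h' => hl _ (h.trans h')

theorem of_append {l v : List B} (h : AvoidsBraids M (l ++ v)) : AvoidsBraids M l := by
  intro l' hl'
  obtain ⟨hsq, hbraid⟩ := h _ (hl'.append_right v)
  exact ⟨fun i hi => hsq i (hi.trans List.infix_append_left),
    fun i j hij hl => hbraid i j hij (hl.trans List.infix_append_left)⟩

theorem isReduced_concat {l : List B} {i : B} (h : AvoidsBraids M (l ++ [i]))
    (hred : cs.IsReduced l) (hfc : FullyCommutative cs (cs.wordProd l)) :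
    cs.IsReduced (l ++ [i]) := by
  have hdesc : ¬ cs.IsRightDescent (cs.wordProd l) i := by
    intro hi
    obtain ⟨ω, hω, hprod⟩ := exists_isReduced_concat_of_isRightDescent cs hi
    have hequiv := (hfc _ _ hred rfl hω hprod).append_right [i]
    exact (h _ hequiv).1 i ⟨ω, [], by simp⟩
  rw [CoxeterSystem.IsReduced, wordProd_append, wordProd_singleton,
    cs.not_isRightDescent_iff.mp hdesc, hred.eq, List.length_append, List.length_singleton]

theorem exists_commEquiv_of_isRightDescent {l : List B} {i j : B}
    (h : AvoidsBraids M (l ++ [j])) (hfc : FullyCommutative cs (cs.wordProd l))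
    (hred : cs.IsReduced (l ++ [j])) (hi : cs.IsRightDescent (cs.wordProd (l ++ [j])) i)
    (hij : i ≠ j) : ∃ ω : List B, CommEquiv M (l ++ [j]) (ω ++ [j, i]) := by
  have hj := isRightDescent_of_isReduced_concat cs hred
  have hM1 : M i j ≠ 1 := M.off_diagonal i j hij
  obtain ⟨m, hm⟩ := Nat.exists_eq_succ_of_ne_zero (matrix_ne_zero_of_isRightDescent cs hi hj)
  obtain ⟨ω, hω, hprod⟩ := exists_isReduced_append_braidWord cs hi hj
  have hsplit : ω ++ braidWord M i j = (ω ++ alternatingWord j i m) ++ [j] := by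
    simp [braidWord, hm, alternatingWord_succ]
  have hequiv : CommEquiv M (l ++ [j]) (ω ++ braidWord M i j) := by
    rw [hsplit] at hω hprod ⊢
    exact hfc.commEquiv_concat hred hω hprod
  have hM3 : ¬ 3 ≤ M i j := fun hM3 => (h _ hequiv).2 i j hM3 List.infix_append_right
  have hM2 : M i j = 2 := by lia
  have hword : braidWord M i j = [i, j] := by simp [braidWord, hM2, alternatingWord]
  exact ⟨ω, hequiv.trans (CommEquiv.of_commStep ⟨ω, [], i, j, hM2, by rw [hword], rfl⟩)⟩

theorem fullyCommutative_concat {l : List B} {j : B} (h : AvoidsBraids M (l ++ [j]))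
    (hfc : FullyCommutative cs (cs.wordProd l)) (hred : cs.IsReduced (l ++ [j]))
    (ih : ∀ ω : List B, ω.length = l.length → AvoidsBraids M ω →
      FullyCommutative cs (cs.wordProd ω)) :
    FullyCommutative cs (cs.wordProd (l ++ [j])) := by
  refine fullyCommutative_of_forall_commEquiv fun l' hl' hprod => ?_
  rcases l'.eq_nil_or_concat' with rfl | ⟨ν, i, rfl⟩
  · have hlength := hred.eq
    rw [← hprod] at hlength
    simp at hlength
  rcases eq_or_ne i j with rfl | hij
  · exact hfc.commEquiv_concat hred hl' hprod
  have hi := hprod ▸ isRightDescent_of_isReduced_concat cs hl'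
  obtain ⟨ω, hω⟩ := h.exists_commEquiv_of_isRightDescent hfc hred hi hij
  have hassoc : ω ++ [j, i] = (ω ++ [j]) ++ [i] := by simp
  rw [hassoc] at hω
  have hlength : (ω ++ [j]).length = l.length := by simpa using hω.length_eq.symm
  have hfc' := ih _ hlength (h.congr hω).of_append
  have hred' : cs.IsReduced ((ω ++ [j]) ++ [i]) := hω.isReduced hred
  exact hω.trans (hfc'.commEquiv_concat hred' hl' (hprod.trans (hω.wordProd_eq cs)))

theorem isReduced_and_fullyCommutative {l : List B} (h : AvoidsBraids M l) :
    cs.IsReduced l ∧ FullyCommutative cs (cs.wordProd l) := by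
  induction hn : l.length using Nat.strong_induction_on generalizing l with
  | _ n ih =>
    rcases l.eq_nil_or_concat' with rfl | ⟨p, j, rfl⟩
    · exact ⟨by simp [CoxeterSystem.IsReduced], by simpa using fullyCommutative_one cs⟩
    have hlt : p.length < n := by simp [← hn]
    obtain ⟨hred, hfc⟩ := ih _ hlt h.of_append rfl
    have hred' := h.isReduced_concat hred hfc
    exact ⟨hred', h.fullyCommutative_concat hfc hred'
      fun ω hω hω' => (ih _ hlt hω' hω).2⟩

end AvoidsBraids

end Stembridge

section Interlaced

/-- Whether `i` may follow the prefix `u` in the heap of the infinite word `(acbcbdcb)^∞`. There the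
letters `b` and `c` form the chain `c₁ b₁ c₂ b₂ ⋯`, each `a` lies between `b_{3q}` and `b_{3q+1}`,
and each `d` lies between `c_{3q+2}` and `c_{3q+3}`. -/
def Enabled (u : List (Fin 4)) : Fin 4 → Prop
  | 0 => u.count 1 = 3 * u.count 0
  | 1 => u.count 2 = u.count 1 + 1 ∧ u.count 0 = u.count 1 / 3 + 1
  | 2 => u.count 1 = u.count 2 ∧ u.count 3 = (u.count 2 + 1) / 3
  | 3 => u.count 2 = 3 * u.count 3 + 2

/-- The linear extensions of the finite order ideals of the heap of `(acbcbdcb)^∞`. -/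
def Interlaced (l : List (Fin 4)) : Prop :=
  ∀ u i, u ++ [i] <+: l → Enabled u i

theorem Enabled.perm {u v : List (Fin 4)} {i : Fin 4} (hu : Enabled u i) (h : u.Perm v) :
    Enabled v i := by
  fin_cases i <;> simpa only [Enabled, h.count_eq] using hu

theorem interlaced_nil : Interlaced [] := by
  simp [Interlaced]

theorem interlaced_concat {l : List (Fin 4)} {i : Fin 4} :
    Interlaced (l ++ [i]) ↔ Interlaced l ∧ Enabled l i := by
  constructor
  · intro h
    exact ⟨fun u j hu => h u j (hu.trans (List.prefix_append _ _)), h l i List.prefix_rfl⟩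
  rintro ⟨hl, hi⟩ u j hu
  rcases List.prefix_concat_iff.mp hu with heq | hu
  · obtain ⟨rfl, hji⟩ := List.append_inj' heq rfl
    obtain rfl : j = i := by simpa using hji
    exact hi
  · exact hl u j hu

namespace Interlaced

theorem enabled {u v : List (Fin 4)} {i : Fin 4} (h : Interlaced (u ++ i :: v)) : Enabled u i :=
  h u i ⟨v, by simp⟩

theorem not_infix_pair {l : List (Fin 4)} (h : Interlaced l) (i : Fin 4) : ¬ [i, i] <:+: l := by
  rintro ⟨u, v, rfl⟩
  have h₁ : Enabled u i := enabled (v := i :: v) (by simpa using h)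
  have h₂ : Enabled (u ++ [i]) i := enabled (v := v) (by simpa using h)
  fin_cases i <;> grind [Enabled]

theorem eq_of_infix_triple {l : List (Fin 4)} {i j : Fin 4} (h : Interlaced l)
    (hij : [j, i, j] <:+: l) : i = 1 ∧ j = 2 ∨ i = 2 ∧ j = 1 := by
  obtain ⟨u, v, rfl⟩ := hij
  have h₁ : Enabled u j := enabled (v := i :: j :: v) (by simpa using h)
  have h₂ : Enabled (u ++ [j]) i := enabled (v := j :: v) (by simpa using h)
  have h₃ : Enabled (u ++ [j, i]) j := enabled (v := v) (by simpa using h)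
  fin_cases i <;> fin_cases j <;> grind [Enabled]

theorem not_infix_quintuple {l : List (Fin 4)} {i j : Fin 4} (h : Interlaced l) :
    ¬ [j, i, j, i, j] <:+: l := by
  intro hij
  have htriple : [j, i, j] <:+: [j, i, j, i, j] := ⟨[], [i, j], rfl⟩
  have hbc := h.eq_of_infix_triple (htriple.trans hij)
  obtain ⟨u, v, rfl⟩ := hij
  have h₁ : Enabled u j := enabled (v := i :: j :: i :: j :: v) (by simpa using h)
  have h₂ : Enabled (u ++ [j]) i := enabled (v := j :: i :: j :: v) (by simpa using h)
  have h₃ : Enabled (u ++ [j, i]) j := enabled (v := i :: j :: v) (by simpa using h)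
  have h₄ : Enabled (u ++ [j, i, j]) i := enabled (v := j :: v) (by simpa using h)
  have h₅ : Enabled (u ++ [j, i, j, i]) j := enabled (v := v) (by simpa using h)
  rcases hbc with ⟨rfl, rfl⟩ | ⟨rfl, rfl⟩ <;> grind [Enabled]

end Interlaced

variable {M : CoxeterMatrix (Fin 4)}

theorem Enabled.swap (hab : M 0 1 ≠ 2) (hbc : M 1 2 ≠ 2) (hcd : M 2 3 ≠ 2) {u : List (Fin 4)}
    {i j : Fin 4} (hij : M i j = 2) (hi : Enabled u i) (hj : Enabled (u ++ [i]) j) :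
    Enabled u j ∧ Enabled (u ++ [j]) i := by
  have hba := M.symmetric 1 0
  have hcb := M.symmetric 2 1
  have hdc := M.symmetric 3 2
  fin_cases i <;> fin_cases j <;> simp_all [Enabled]

theorem Interlaced.of_commStep (hab : M 0 1 ≠ 2) (hbc : M 1 2 ≠ 2) (hcd : M 2 3 ≠ 2)
    {l l' : List (Fin 4)} (h : CommStep M l l') (hl : Interlaced l) : Interlaced l' := by
  obtain ⟨u, v, i, j, hij, rfl, rfl⟩ := h
  induction v using List.reverseRecOn with
  | nil =>
    rw [List.append_cons, interlaced_concat, interlaced_concat] at hl ⊢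
    obtain ⟨⟨hu, hi⟩, hj⟩ := hl
    obtain ⟨hj', hi'⟩ := Enabled.swap hab hbc hcd hij hi hj
    exact ⟨⟨hu, hj'⟩, hi'⟩
  | append_singleton v x ih =>
    simp only [← List.cons_append, ← List.append_assoc, interlaced_concat] at hl ⊢
    exact ⟨ih hl.1, hl.2.perm ((List.Perm.swap j i v).append_left u)⟩

theorem Interlaced.of_commEquiv (hab : M 0 1 ≠ 2) (hbc : M 1 2 ≠ 2) (hcd : M 2 3 ≠ 2)
    {l l' : List (Fin 4)} (h : CommEquiv M l l') (hl : Interlaced l) : Interlaced l' :=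
  (h.eq_of_forall_commStep fun _ _ hstep => propext
    ⟨of_commStep hab hbc hcd hstep, of_commStep hab hbc hcd hstep.symm⟩).mp hl

theorem Interlaced.not_infix_braidWord (hbc : M 1 2 = 0 ∨ 5 ≤ M 1 2) {l : List (Fin 4)}
    (h : Interlaced l) {i j : Fin 4} (hij : 3 ≤ M i j) : ¬ braidWord M i j <:+: l := by
  intro hbraid
  have htriple : [j, i, j] <:+: l :=
    (alternatingWord_isSuffix_of_le i j hij).isInfix.trans hbraid
  have hij5 : 5 ≤ M i j := by
    rcases h.eq_of_infix_triple htriple with ⟨rfl, rfl⟩ | ⟨rfl, rfl⟩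
    · lia
    · rw [M.symmetric] at hij ⊢
      lia
  exact h.not_infix_quintuple ((alternatingWord_isSuffix_of_le i j hij5).isInfix.trans hbraid)

theorem Interlaced.avoidsBraids (hab : M 0 1 ≠ 2) (hbc : M 1 2 = 0 ∨ 5 ≤ M 1 2) (hcd : M 2 3 ≠ 2)
    {l : List (Fin 4)} (h : Interlaced l) : AvoidsBraids M l := by
  intro l' hl'
  have h' : Interlaced l' := h.of_commEquiv hab (by lia) hcd hl'
  exact ⟨h'.not_infix_pair, fun i j hij => h'.not_infix_braidWord hbc hij⟩

theorem wWord_succ (k : ℕ) :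
    wWord (k + 1) = wWord k ++ if k % 2 = 0 then [0, 2, 1, 2] else [1, 3, 2, 1] := by
  simp only [wWord, List.ofFn_succ_last]
  simp

theorem count_wWord (k : ℕ) :
    (wWord k).count 0 = (k + 1) / 2 ∧ (wWord k).count 1 = 3 * k / 2 ∧
      (wWord k).count 2 = (3 * k + 1) / 2 ∧ (wWord k).count 3 = k / 2 := by
  induction k with
  | zero => simp [wWord]
  | succ k ih =>
    rw [wWord_succ]
    split_ifs with hk <;> simp [ih] <;> lia

theorem interlaced_wWord (k : ℕ) : Interlaced (wWord k) := by
  induction k with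
  | zero => exact interlaced_nil
  | succ k ih =>
    obtain ⟨h₀, h₁, h₂, h₃⟩ := count_wWord k
    have hsplit (p q r s : Fin 4) :
        wWord k ++ [p, q, r, s] = wWord k ++ [p] ++ [q] ++ [r] ++ [s] := by simp
    rw [wWord_succ]
    split_ifs with hk <;> simp only [hsplit, interlaced_concat] <;> grind [Enabled]

end Interlaced

theorem stmt13_general {W : Type*} [Group W] {M : CoxeterMatrix (Fin 4)} (cs : CoxeterSystem M W)
    (hab : M 0 1 ≠ 2) (hbc : M 1 2 = 0 ∨ 5 ≤ M 1 2) (hcd : M 2 3 ≠ 2) (k : ℕ) :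
    cs.IsReduced (wWord k) ∧ FullyCommutative cs (cs.wordProd (wWord k)) :=
  ((interlaced_wWord k).avoidsBraids hab hbc hcd).isReduced_and_fullyCommutative

/-- in the Coxeter group with diagram `a—b—c—d`, `m(b,c) = 5`,
`m(a,b) = m(c,d) = 3` and all other pairs commuting, the word
`w_k = (acbc)(bdcb)(acbc)⋯` with `k` total factors is a reduced word of a fully
commutative element for every `k ≥ 0`. -/
theorem stmt13 {W : Type*} [Group W] {M : CoxeterMatrix (Fin 4)} (cs : CoxeterSystem M W)
    (hab : M 0 1 = 3) (hbc : M 1 2 = 5) (hcd : M 2 3 = 3)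
    (hac : M 0 2 = 2) (had : M 0 3 = 2) (hbd : M 1 3 = 2) (k : ℕ) :
    cs.IsReduced (wWord k) ∧ FullyCommutative cs (cs.wordProd (wWord k)) :=
  stmt13_general cs (by simp [hab]) (by simp [hbc]) (by simp [hcd]) k
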